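/- arXiv:2409.14948 — 4 statements merged into one kernel-verified Lean document; each statement's English description precedes it below -/
import Mathlib

section
/- Let V ⊆ ℝ^d be a proper linear subspace (dim V ≤ d−1) and let c : ℤ^d → ℂ. If c has a periodizer g with supp(g) ∩ V = {0} (intersecting supp(g), viewed inside ℝ^d, with V), then c also has an annihilator f (a nonzero polynomial with fc = 0) such that supp(f) ∩ V = {0}. -/
namespace PaperFormal

/-- View an integer vector inside `ℝ^d`. -/
def intVecR {d : ℕ} (u : Fin d → ℤ) : Fin d → ℝ := fun i => (u i : ℝ)

/-- View an integer vector inside `ℚ^d`. -/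
def intVecQ {d : ℕ} (u : Fin d → ℤ) : Fin d → ℚ := fun i => (u i : ℚ)

/-- A (Laurent) polynomial: a finitely supported integer-valued function on `ℤ^d`. -/
def IsPoly {d : ℕ} (f : (Fin d → ℤ) → ℤ) : Prop := (Function.support f).Finite

/-- The product `(fc)(u) = ∑_v f(v) · c(u − v)` of a polynomial `f` with `c : ℤ^d → ℤ`. -/
noncomputable def polyApply {d : ℕ} (f : (Fin d → ℤ) → ℤ) (c : (Fin d → ℤ) → ℤ) :
    (Fin d → ℤ) → ℤ := fun u => ∑ᶠ v, f v * c (u - v)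

/-- The product `(fc)(u) = ∑_v f(v) · c(u − v)` of a polynomial `f` with `c : ℤ^d → ℂ`. -/
noncomputable def polyApplyC {d : ℕ} (f : (Fin d → ℤ) → ℤ) (c : (Fin d → ℤ) → ℂ) :
    (Fin d → ℤ) → ℂ := fun u => ∑ᶠ v, (f v : ℂ) * c (u - v)

/-- `c` is `v`-periodic: `c(u + v) = c(u)` for all `u`. -/
def Periodic {d : ℕ} (c : (Fin d → ℤ) → ℤ) (v : Fin d → ℤ) : Prop := ∀ u, c (u + v) = c u

/-- `c : ℤ^d → ℂ` is `v`-periodic. -/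
def PeriodicC {d : ℕ} (c : (Fin d → ℤ) → ℂ) (v : Fin d → ℤ) : Prop := ∀ u, c (u + v) = c u

/-- `c` is `k`-periodic: it has `k` periods that are linearly independent over `ℚ`. -/
def KPeriodic {d : ℕ} (k : ℕ) (c : (Fin d → ℤ) → ℤ) : Prop :=
  ∃ v : Fin k → (Fin d → ℤ),
    (LinearIndependent ℚ fun i => intVecQ (v i)) ∧ ∀ i, Periodic c (v i)

/-- `c` is strongly periodic: it is `d`-periodic. -/
def StronglyPeriodic {d : ℕ} (c : (Fin d → ℤ) → ℤ) : Prop := KPeriodic d c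

/-- `c : ℤ^d → ℂ` is strongly periodic. -/
def StronglyPeriodicC {d : ℕ} (c : (Fin d → ℤ) → ℂ) : Prop :=
  ∃ v : Fin d → (Fin d → ℤ),
    (LinearIndependent ℚ fun i => intVecQ (v i)) ∧ ∀ i, PeriodicC c (v i)

/-- Two nonzero integer vectors are non-parallel if they are linearly independent over `ℚ`. -/
def NonParallel {d : ℕ} (v w : Fin d → ℤ) : Prop :=
  LinearIndependent ℚ ![intVecQ v, intVecQ w]

/-- A line polynomial in direction `v`: a polynomial whose support contains at least two points
and is contained in `u + ℚv` for some `u ∈ ℤ^d`. -/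
def IsLinePoly {d : ℕ} (f : (Fin d → ℤ) → ℤ) (v : Fin d → ℤ) : Prop :=
  IsPoly f ∧ v ≠ 0 ∧ 2 ≤ (Function.support f).ncard ∧
    ∃ u : Fin d → ℤ, ∀ w ∈ Function.support f, ∃ q : ℚ, intVecQ w = intVecQ u + q • intVecQ v

/-- The difference polynomial `X^v − 1`: value `1` at `v`, value `−1` at `0`, and `0` elsewhere. -/
def diffPoly {d : ℕ} (v : Fin d → ℤ) : (Fin d → ℤ) → ℤ :=
  fun u => if u = v then 1 else if u = 0 then -1 else 0

/-- `c : ℤ^d → ℂ` is periodic in direction `v`: it is `kv`-periodic for some nonzero integer `k`. -/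
def PeriodicInDirC {d : ℕ} (c : (Fin d → ℤ) → ℂ) (v : Fin d → ℤ) : Prop :=
  ∃ k : ℤ, k ≠ 0 ∧ PeriodicC c (k • v)

/-- `c : ℤ^d → ℂ` is `V`-periodic for a linear subspace `V ⊆ ℝ^d`: it is periodic in
direction `v` for every nonzero integer vector `v` lying in `V`. -/
def VPeriodicC {d : ℕ} (V : Submodule ℝ (Fin d → ℝ)) (c : (Fin d → ℤ) → ℂ) : Prop :=
  ∀ v : Fin d → ℤ, v ≠ 0 → intVecR v ∈ V → PeriodicInDirC c v

/-- The discrete cube `C_m + t`. -/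
def cube {d : ℕ} (m : ℕ) (t : Fin d → ℤ) : Set (Fin d → ℤ) :=
  {u | ∀ i, |u i - t i| ≤ (m : ℤ)}

/-- `c : ℤ^d → ℤ` is sparse: for some positive integer `a`,
`|supp(c) ∩ (C_m + t)| ≤ a·m` for all positive `m` and all `t`. -/
def Sparse {d : ℕ} (c : (Fin d → ℤ) → ℤ) : Prop :=
  ∃ a : ℕ, 0 < a ∧ ∀ m : ℕ, 0 < m → ∀ t : Fin d → ℤ,
    (Function.support c ∩ cube m t).ncard ≤ a * m

/-- A `v`-fiber: a function whose support is contained in `w + ℚv` for some `w ∈ ℤ^d`. -/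
def IsFiber {d : ℕ} (e : (Fin d → ℤ) → ℤ) (v : Fin d → ℤ) : Prop :=
  ∃ w : Fin d → ℤ, ∀ x ∈ Function.support e, ∃ q : ℚ, intVecQ x = intVecQ w + q • intVecQ v

/-- `c` is a sum of finitely many periodic `v`-fibers. -/
def FinSumPeriodicFibers {d : ℕ} (v : Fin d → ℤ) (c : (Fin d → ℤ) → ℤ) : Prop :=
  ∃ (r : ℕ) (e : Fin r → ((Fin d → ℤ) → ℤ)), c = ∑ j, e j ∧
    ∀ j, IsFiber (e j) v ∧ ∃ w : Fin d → ℤ, w ≠ 0 ∧ Periodic (e j) w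

end PaperFormal
namespace PaperFormal

/-!
If `w ∉ V`, each point of `supp(g)` is moved into `V` by at most one multiple of `w`, so some
translation by `n • w` pushes the whole finite set `supp(g)` off `V`. When `w` is moreover a period
of `gc`, the polynomial `f = g - X^(n • w) g` annihilates `c`, and it agrees with `g` on `V`.
A strongly periodic function has a period outside every proper subspace, because its `d` linearly
independent periods span `ℝ^d`.
-/

section Translate

variable {G R : Type*} [AddCommGroup G]

theorem hasFiniteSupport_translate [Zero R] {f : G → R} (hf : f.HasFiniteSupport) (a : G) :
    (translate a f).HasFiniteSupport :=
  hf.comp_of_injective sub_left_injective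

theorem support_sub_translate_inter [AddGroup R] {g : G → R} {a : G} {A : Set G}
    (hA : ∀ u ∈ A, u - a ∉ Function.support g) :
    Function.support (g - translate a g) ∩ A = Function.support g ∩ A := by
  ext u
  refine and_congr_left fun hu => ?_
  have hshift : g (u - a) = 0 := Function.notMem_support.mp (hA u hu)
  simp only [Function.mem_support, Pi.sub_apply, translate_apply, hshift, sub_zero]

end Translate

section Convolution

variable {G R M : Type*} [AddCommGroup G]

/-- The product `fc` of a group-ring element `f`, encoded as a function `G → R`, and `c : G → M`.
It generalizes `polyApplyC`, and is meaningful for finitely supported `f`: a `finsum` with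
infinitely many nonzero terms is `0`. -/
noncomputable def convolve [AddCommMonoid M] [SMul R M] (f : G → R) (c : G → M) : G → M :=
  fun u => ∑ᶠ v, f v • c (u - v)

theorem convolve_translate [AddCommMonoid M] [SMul R M] (a : G) (f : G → R) (c : G → M) :
    convolve (translate a f) c = translate a (convolve f c) := by
  funext u
  calc ∑ᶠ v, f (v - a) • c (u - v)
      = ∑ᶠ v, f (v - a) • c (u - a - (v - a)) := by simp only [sub_sub_sub_cancel_right]
    _ = ∑ᶠ v, f v • c (u - a - v) :=
        finsum_comp_equiv (Equiv.subRight a) (f := fun v => f v • c (u - a - v))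

variable [Ring R] [AddCommGroup M] [Module R M]

theorem convolve_sub {f g : G → R} (hf : f.HasFiniteSupport) (hg : g.HasFiniteSupport)
    (c : G → M) : convolve (f - g) c = convolve f c - convolve g c := by
  funext u
  simp only [convolve, Pi.sub_apply, sub_smul]
  exact finsum_sub_distrib (hf.fun_smul_left _) (hg.fun_smul_left _)

theorem convolve_sub_translate_eq_zero {g : G → R} (hg : g.HasFiniteSupport) {c : G → M} {a : G}
    (ha : Function.Periodic (convolve g c) a) : convolve (g - translate a g) c = 0 := by
  rw [convolve_sub hg (hasFiniteSupport_translate hg a), convolve_translate, sub_eq_zero]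
  exact funext fun u => (ha.sub_eq u).symm

theorem polyApplyC_eq_convolve {d : ℕ} (f : (Fin d → ℤ) → ℤ) (c : (Fin d → ℤ) → ℂ) :
    polyApplyC f c = convolve f c := by
  funext u
  simp only [polyApplyC, convolve, zsmul_eq_mul]

end Convolution

section Subspace

variable {K E : Type*} [DivisionRing K] [AddCommGroup E] [Module K E]

theorem exists_nat_forall_add_nsmul_notMem [CharZero K] (V : Submodule K E) {x : E} (hx : x ∉ V)
    {S : Set E} (hS : S.Finite) : ∃ n : ℕ, ∀ s ∈ S, s + n • x ∉ V := by
  have hsub (s : E) : {n : ℕ | s + n • x ∈ V}.Subsingleton := by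
    intro n hn m hm
    by_contra hnm
    have hdiff : ((n : K) - m) • x ∈ V := by
      simpa only [add_sub_add_left_eq_sub, sub_smul, Nat.cast_smul_eq_nsmul] using V.sub_mem hn hm
    exact hx ((V.smul_mem_iff (sub_ne_zero.mpr (Nat.cast_injective.ne hnm))).mp hdiff)
  obtain ⟨n, hn⟩ := (hS.biUnion fun s _ => (hsub s).finite).exists_notMem
  exact ⟨n, fun s hs hmem => hn (Set.mem_biUnion hs hmem)⟩

theorem exists_notMem_of_linearIndependent_of_card_eq_finrank [FiniteDimensional K E]
    {κ : Type*} [Fintype κ] {b : κ → E} (hb : LinearIndependent K b)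
    (hcard : Fintype.card κ = Module.finrank K E) {V : Submodule K E} (hV : V ≠ ⊤) :
    ∃ i, b i ∉ V := by
  by_contra! hall
  refine hV (top_le_iff.mp ?_)
  rw [← hb.span_eq_top_of_card_eq_finrank' hcard, Submodule.span_le]
  exact Set.range_subset_iff.mpr hall

end Subspace

theorem linearIndependent_intVecR_iff_intVecQ {d : ℕ} {κ : Type*} {v : κ → Fin d → ℤ} :
    LinearIndependent ℝ (fun i => intVecR (v i)) ↔ LinearIndependent ℚ fun i => intVecQ (v i) := by
  change LinearIndependent ℝ (fun i => algebraMap ℤ ℝ ∘ v i) ↔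
    LinearIndependent ℚ fun i => algebraMap ℤ ℚ ∘ v i
  rw [linearIndependent_algebraMap_comp_iff, linearIndependent_algebraMap_comp_iff]

theorem StronglyPeriodicC.exists_periodicC_notMem {d : ℕ} {c : (Fin d → ℤ) → ℂ}
    (hc : StronglyPeriodicC c) {V : Submodule ℝ (Fin d → ℝ)} (hV : V ≠ ⊤) :
    ∃ w, PeriodicC c w ∧ intVecR w ∉ V := by
  obtain ⟨v, hindep, hper⟩ := hc
  obtain ⟨i, hi⟩ := exists_notMem_of_linearIndependent_of_card_eq_finrank
    (linearIndependent_intVecR_iff_intVecQ.mpr hindep) (by simp) hV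
  exact ⟨v i, hper i, hi⟩

theorem annihilator_avoiding_subspace_from_periodizer_general
    {G R M K E : Type*} [AddCommGroup G] [Ring R] [AddCommGroup M] [Module R M]
    [DivisionRing K] [CharZero K] [AddCommGroup E] [Module K E]
    (ι : G →+ E) (V : Submodule K E) (c : G → M) {g : G → R} (hg : g.HasFiniteSupport)
    {w : G} (hper : Function.Periodic (convolve g c) w) (hw : ι w ∉ V)
    (hgV : (ι '' Function.support g ∩ V).Nonempty) :
    ∃ f : G → R, f.HasFiniteSupport ∧ f ≠ 0 ∧ convolve f c = 0 ∧
      ι '' Function.support f ∩ V = ι '' Function.support g ∩ V := by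
  obtain ⟨n, hn⟩ := exists_nat_forall_add_nsmul_notMem V hw (hg.image ι)
  have hoff : ∀ u ∈ ι ⁻¹' V, u - n • w ∉ Function.support g := fun u hu hmem =>
    hn _ (Set.mem_image_of_mem ι hmem) (by rwa [← map_nsmul, ← map_add, sub_add_cancel])
  have hsupp : ι '' Function.support (g - translate (n • w) g) ∩ V =
      ι '' Function.support g ∩ V := by
    simp only [← Set.image_inter_preimage, support_sub_translate_inter hoff]
  refine ⟨g - translate (n • w) g, hg.sub (hasFiniteSupport_translate hg _), fun hzero => ?_,
    convolve_sub_translate_eq_zero hg (hper.nsmul n), hsupp⟩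
  rw [← hsupp, hzero, Function.support_zero, Set.image_empty, Set.empty_inter] at hgV
  exact Set.not_nonempty_empty hgV

/-- If `V ⊆ ℝ^d` is a proper linear subspace and `c : ℤ^d → ℂ` has a
periodizer `g` with `supp(g) ∩ V = {0}`, then `c` has an annihilator `f` with
`supp(f) ∩ V = {0}`. -/
theorem annihilator_avoiding_subspace_from_periodizer
    {d : ℕ} (V : Submodule ℝ (Fin d → ℝ)) (hV : V ≠ ⊤)
    (c : (Fin d → ℤ) → ℂ)
    (g : (Fin d → ℤ) → ℤ) (hg : IsPoly g)
    (hgper : StronglyPeriodicC (polyApplyC g c))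
    (hgsupp : (intVecR '' Function.support g) ∩ (V : Set (Fin d → ℝ)) = {0}) :
    ∃ f : (Fin d → ℤ) → ℤ, IsPoly f ∧ f ≠ 0 ∧ polyApplyC f c = 0 ∧
      (intVecR '' Function.support f) ∩ (V : Set (Fin d → ℝ)) = {0} := by
  obtain ⟨w, hper, hw⟩ := hgper.exists_periodicC_notMem hV
  simp only [polyApplyC_eq_convolve] at hper ⊢
  exact hgsupp ▸ annihilator_avoiding_subspace_from_periodizer_general
    ((Int.castAddHom ℝ).compLeft (Fin d)) V c hg hper hw (hgsupp ▸ Set.singleton_nonempty 0)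

end PaperFormal
end

section
/- Let d ≥ 1, let k ∈ {1,…,d}, and let c_1, …, c_m : ℤ^d → ℤ be k-periodic functions. Then for every (k−1)-dimensional linear subspace V ⊆ ℝ^d, the function c = c_1 + … + c_m has a periodizer f such that supp(f) ∩ V = {0} (intersecting supp(f), viewed inside ℝ^d, with V). -/
namespace PaperFormal

/-!
Each summand `c` has a period `w ∉ V`, since `k` independent periods do not fit into the
`(k - 1)`-dimensional `V`. For all `n`, the polynomial `X^(-n w) - 1` annihilates `c`. Multiplying
an annihilator `f` of the remaining summands by it gives `X^(-n w) f - f`, and for suitable `n`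
the translate `X^(-n w) f` has support disjoint from `V`, so on `V` the product is just `-f`.
Starting from `f = 1` and treating the summands one by one, we obtain a polynomial that even
annihilates their sum.
-/

open Function (Injective support support_mul_subset_left support_sub mem_support)
open Set

section Embedding

variable {d : ℕ}

lemma intVecR_zero : intVecR (0 : Fin d → ℤ) = 0 :=
  map_zero ((Int.castAddHom ℝ).compLeft (Fin d))

lemma intVecR_add (u v : Fin d → ℤ) : intVecR (u + v) = intVecR u + intVecR v :=
  map_add ((Int.castAddHom ℝ).compLeft (Fin d)) u v

lemma intVecR_nsmul (n : ℕ) (v : Fin d → ℤ) : intVecR (n • v) = n • intVecR v :=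
  map_nsmul ((Int.castAddHom ℝ).compLeft (Fin d)) n v

lemma linearIndependent_intVecR {ι : Type*} {v : ι → Fin d → ℤ}
    (hv : LinearIndependent ℚ fun i => intVecQ (v i)) :
    LinearIndependent ℝ fun i => intVecR (v i) := by
  have cast_intVecQ : (fun i => intVecR (v i)) = fun i => algebraMap ℚ ℝ ∘ intVecQ (v i) := by
    funext i j
    simp [intVecR, intVecQ]
  rw [cast_intVecQ]
  exact linearIndependent_algebraMap_comp_iff.2 hv

lemma image_support_inter_eq_singleton_zero_iff {f : (Fin d → ℤ) → ℤ}
    {V : Submodule ℝ (Fin d → ℝ)} :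
    intVecR '' support f ∩ (V : Set (Fin d → ℝ)) = {0} ↔
      ∀ u, intVecR u ∈ V → (f u ≠ 0 ↔ u = 0) := by
  have intVecR_injective : Injective (intVecR (d := d)) := Int.cast_injective.comp_left
  rw [← image_inter_preimage, ← intVecR_zero, ← image_singleton,
    intVecR_injective.image_injective.eq_iff, Set.ext_iff]
  refine forall_congr' fun u => ?_
  simp only [mem_inter_iff, mem_support, mem_preimage, SetLike.mem_coe, mem_singleton_iff]
  have zero_mem : u = 0 → intVecR u ∈ V := by
    rintro rfl
    exact intVecR_zero ▸ V.zero_mem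
  tauto

end Embedding

section Periods

variable {d k : ℕ}

lemma stronglyPeriodic_zero : StronglyPeriodic (0 : (Fin d → ℤ) → ℤ) := by
  refine ⟨fun i => Pi.single i 1, ?_, fun _ _ => rfl⟩
  convert Pi.linearIndependent_single_one (Fin d) ℚ using 1
  funext i j
  simp [intVecQ, Pi.single_apply]

lemma KPeriodic.exists_period_notMem {c : (Fin d → ℤ) → ℤ} (hc : KPeriodic k c)
    {V : Submodule ℝ (Fin d → ℝ)} (hV : Module.finrank ℝ V < k) :
    ∃ w, Periodic c w ∧ intVecR w ∉ V := by
  obtain ⟨v, hv, hper⟩ := hc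
  by_contra! hmem
  have span_le : Submodule.span ℝ (range fun i => intVecR (v i)) ≤ V :=
    Submodule.span_le.2 (range_subset_iff.2 fun i => hmem (v i) (hper i))
  have card_le := Submodule.finrank_mono span_le
  rw [finrank_span_eq_card (linearIndependent_intVecR hv), Fintype.card_fin] at card_le
  exact card_le.not_gt hV

lemma fwdDiff_eq_zero_iff_periodic {c : (Fin d → ℤ) → ℤ} {v : Fin d → ℤ} :
    fwdDiff v c = 0 ↔ Periodic c v := by
  simp only [funext_iff, fwdDiff, Pi.zero_apply, sub_eq_zero, Periodic]

end Periods

section Product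

variable {d : ℕ} {f : (Fin d → ℤ) → ℤ}

lemma IsPoly.support_mul_finite (hf : IsPoly f) (g : (Fin d → ℤ) → ℤ) :
    (support fun x => f x * g x).Finite :=
  hf.subset (support_mul_subset_left f g)

lemma IsPoly.comp_add_right (hf : IsPoly f) (v : Fin d → ℤ) : IsPoly fun x => f (x + v) :=
  hf.preimage (add_left_injective v).injOn

lemma IsPoly.fwdDiff (hf : IsPoly f) (v : Fin d → ℤ) : IsPoly (fwdDiff v f) :=
  ((hf.comp_add_right v).union hf).subset (support_sub _ _)

lemma polyApply_add (hf : IsPoly f) (c c' : (Fin d → ℤ) → ℤ) :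
    polyApply f (c + c') = polyApply f c + polyApply f c' := by
  funext u
  simp only [polyApply, Pi.add_apply, mul_add]
  exact finsum_add_distrib (hf.support_mul_finite _) (hf.support_mul_finite _)

lemma polyApply_fwdDiff (hf : IsPoly f) (c : (Fin d → ℤ) → ℤ) (v : Fin d → ℤ) :
    polyApply (fwdDiff v f) c = fwdDiff v (polyApply f c) := by
  funext u
  have reindex : polyApply f c (u + v) = ∑ᶠ x, f (x + v) * c (u - x) := by
    rw [polyApply, ← finsum_comp_equiv (Equiv.addRight v)]
    simp only [Equiv.coe_addRight, add_sub_add_right_eq_sub]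
  rw [fwdDiff, reindex]
  simp only [polyApply, fwdDiff, sub_mul]
  exact finsum_sub_distrib ((hf.comp_add_right v).support_mul_finite _) (hf.support_mul_finite _)

lemma Periodic.polyApply {c : (Fin d → ℤ) → ℤ} {v : Fin d → ℤ} (hc : Periodic c v)
    (f : (Fin d → ℤ) → ℤ) : Periodic (polyApply f c) v := fun u => by
  simp only [PaperFormal.polyApply, add_sub_right_comm u v, hc _]

end Product

lemma exists_forall_sub_nsmul_notMem {K M : Type*} [DivisionRing K] [CharZero K] [AddCommGroup M]
    [Module K M] {V : Submodule K M} {w : M} (hw : w ∉ V) {s : Set M} (hs : s.Finite) :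
    ∃ n : ℕ, ∀ u ∈ s, u - n • w ∉ V := by
  have mk_ne_zero : V.mkQ w ≠ 0 := by simpa using hw
  have mk_nsmul_injective : Injective fun n : ℕ => V.mkQ (n • w) := by
    simp only [← Nat.cast_smul_eq_nsmul K, map_smul]
    exact (smul_left_injective K mk_ne_zero).comp Nat.cast_injective
  obtain ⟨_, ⟨n, rfl⟩, hn⟩ :=
    (infinite_range_of_injective mk_nsmul_injective).exists_notMem_finite (hs.image V.mkQ)
  exact ⟨n, fun u hu h => hn ⟨u, hu, (Submodule.Quotient.eq V).2 h⟩⟩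

lemma exists_fwdDiff_nsmul_eq_neg {d : ℕ} {f : (Fin d → ℤ) → ℤ} (hf : IsPoly f)
    {V : Submodule ℝ (Fin d → ℝ)} {w : Fin d → ℤ} (hw : intVecR w ∉ V) :
    ∃ n : ℕ, ∀ u, intVecR u ∈ V → fwdDiff (n • w) f u = -f u := by
  obtain ⟨n, hn⟩ := exists_forall_sub_nsmul_notMem hw (hf.image intVecR)
  refine ⟨n, fun u hu => ?_⟩
  have translate_eq_zero : f (u + n • w) = 0 := by
    by_contra hne
    refine hn _ (mem_image_of_mem intVecR hne) ?_
    rwa [intVecR_add, intVecR_nsmul, add_sub_cancel_right]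
  rw [fwdDiff, translate_eq_zero, zero_sub]

theorem sum_of_k_periodic_has_periodizer_avoiding_subspace_general {d : ℕ} {ι : Type*}
    (s : Finset ι) (cs : ι → (Fin d → ℤ) → ℤ) (V : Submodule ℝ (Fin d → ℝ))
    (hper : ∀ i ∈ s, ∃ w, Periodic (cs i) w ∧ intVecR w ∉ V) :
    ∃ f : (Fin d → ℤ) → ℤ, IsPoly f ∧ polyApply f (∑ i ∈ s, cs i) = 0 ∧
      intVecR '' support f ∩ (V : Set (Fin d → ℝ)) = {0} := by
  classical
  simp only [image_support_inter_eq_singleton_zero_iff]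
  induction s using Finset.induction_on with
  | empty =>
    refine ⟨Pi.single 0 1, (finite_singleton 0).subset Pi.support_single_subset, ?_, ?_⟩
    · funext u
      simp [polyApply]
    · simp [Pi.single_apply]
  | insert j s hj ih =>
    obtain ⟨f, hf, annihilates, avoids⟩ := ih fun i hi => hper i (Finset.mem_insert_of_mem hi)
    obtain ⟨w, hw, hwV⟩ := hper j (Finset.mem_insert_self j s)
    obtain ⟨n, hn⟩ := exists_fwdDiff_nsmul_eq_neg hf hwV
    have period : Periodic (cs j) (n • w) := Function.Periodic.nsmul hw n
    refine ⟨fwdDiff (n • w) f, hf.fwdDiff _, ?_, fun u hu => ?_⟩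
    · rw [Finset.sum_insert hj, polyApply_fwdDiff hf, polyApply_add hf, annihilates, add_zero]
      exact fwdDiff_eq_zero_iff_periodic.2 (period.polyApply f)
    · rw [hn u hu, neg_ne_zero]
      exact avoids u hu

/-- A finite sum of `k`-periodic functions `c₁, …, c_m : ℤ^d → ℤ` has, for
every `(k−1)`-dimensional linear subspace `V ⊆ ℝ^d`, a periodizer `f` with
`supp(f) ∩ V = {0}`. -/
theorem sum_of_k_periodic_has_periodizer_avoiding_subspace
    {d k m : ℕ} (hd : 1 ≤ d) (hk1 : 1 ≤ k) (hkd : k ≤ d)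
    (cs : Fin m → ((Fin d → ℤ) → ℤ)) (hper : ∀ i, KPeriodic k (cs i))
    (V : Submodule ℝ (Fin d → ℝ)) (hV : Module.finrank ℝ V = k - 1) :
    ∃ f : (Fin d → ℤ) → ℤ, IsPoly f ∧ StronglyPeriodic (polyApply f (∑ i, cs i)) ∧
      (intVecR '' Function.support f) ∩ (V : Set (Fin d → ℝ)) = {0} := by
  obtain ⟨f, hf, annihilates, avoids⟩ :=
    sum_of_k_periodic_has_periodizer_avoiding_subspace_general Finset.univ cs V
      fun i _ => (hper i).exists_period_notMem (by omega)
  exact ⟨f, hf, annihilates ▸ stronglyPeriodic_zero, avoids⟩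

end PaperFormal
end

section
/- Let c : ℤ^d → ℤ be a sparse configuration that is periodic in direction v for some nonzero v ∈ ℤ^d. Then c is a finite sum of periodic v-fibers. -/
namespace PaperFormal

/-!
Let `w = kv` be a period of `c`. If the support of `c` contains points `x₁, …, x_s` in distinct
cosets of `ℤw`, then it also contains the `s * n` distinct points `x_i + jw` with `j < n`, all of
norm at most `M + n‖w‖` where `M` bounds the `x_i`. Sparseness with constant `a` gives
`s * n ≤ a (M + n‖w‖)` for every `n`, hence `s ≤ a‖w‖`. So the support meets only finitely many
cosets of `ℤw`, and restricting `c` to each of them writes it as a finite sum of periodic fibers.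
-/

open AddSubgroup Function Metric Set

section Cosets

variable {G : Type*} [AddGroup G] {w : G}

lemma injOn_add_nsmul (hw : ¬IsOfFinAddOrder w) {S : Set G}
    (hS : S.InjOn ((↑) : G → G ⧸ zmultiples w)) :
    (S ×ˢ univ).InjOn fun p : G × ℕ => p.1 + p.2 • w := by
  rintro ⟨x, i⟩ ⟨hx, -⟩ ⟨y, j⟩ ⟨hy, -⟩ (h : x + i • w = y + j • w)
  have mk_add_nsmul (z : G) (n : ℕ) : ((z + n • w : G) : G ⧸ zmultiples w) = z :=
    QuotientAddGroup.mk_add_of_mem z (nsmul_mem_zmultiples w n)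
  obtain rfl : x = y := hS hx hy (by rw [← mk_add_nsmul x i, h, mk_add_nsmul])
  rw [injective_nsmul_iff_not_isOfFinAddOrder.mpr hw (add_left_cancel h)]

lemma periodic_indicator_preimage_mk {M : Type*} [Zero M] {f : G → M} (hf : Function.Periodic f w)
    (q : G ⧸ zmultiples w) :
    Function.Periodic (((↑) ⁻¹' {q} : Set G).indicator f) w := by
  intro u
  have hu : ((u + w : G) : G ⧸ zmultiples w) = u :=
    QuotientAddGroup.mk_add_of_mem u (mem_zmultiples w)
  simp only [indicator, mem_preimage, mem_singleton_iff, hu, hf u]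

end Cosets

lemma sum_indicator_preimage_singleton {ι α β M : Type*} [Fintype ι] [AddCommMonoid M] {f : α → M}
    {π : α → β} {q : ι → β} (hq : Injective q) (hf : π '' support f ⊆ range q) :
    ∑ i, (π ⁻¹' {q i}).indicator f = f := by
  have hdisj : ((Finset.univ : Finset ι) : Set ι).PairwiseDisjoint fun i => π ⁻¹' {q i} :=
    fun i _ j _ hij => (disjoint_singleton.mpr (hq.ne hij)).preimage π
  have hcover : support f ⊆ ⋃ i ∈ Finset.univ, π ⁻¹' {q i} := fun x hx => by
    obtain ⟨i, hi⟩ := hf (mem_image_of_mem π hx)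
    exact mem_biUnion (Finset.mem_univ i) hi.symm
  conv_rhs => rw [← indicator_eq_self.mpr hcover, Finset.indicator_biUnion _ _ hdisj]
  exact Finset.sum_fn _ _

lemma le_mul_of_forall_mul_le_mul_add {s a M L : ℕ} (h : ∀ n, s * n ≤ a * (M + n * L)) :
    s ≤ a * L := by
  by_contra! hlt
  have hn := h (a * M + 1)
  have hs := Nat.mul_le_mul_right (a * M + 1) (Nat.succ_le_of_lt hlt)
  linarith

section LinearGrowth

variable {G : Type*} [SeminormedAddCommGroup G] {w : G} {A : Set G} {a : ℕ}

lemma card_mul_le_of_mapsTo_add (hw : ¬IsOfFinAddOrder w) (hA : MapsTo (· + w) A A)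
    (hgrowth : ∀ m : ℕ, 0 < m → (A ∩ closedBall 0 m).encard ≤ a * m) {S : Finset G}
    (hSA : ↑S ⊆ A) (hS : (S : Set G).InjOn ((↑) : G → G ⧸ zmultiples w)) {M : ℕ} (hM : 0 < M)
    (hSM : ∀ x ∈ S, ‖x‖ ≤ M) (n : ℕ) :
    S.card * n ≤ a * (M + n * ⌈‖w‖⌉₊) := by
  let translates : Set G := (fun p : G × ℕ => p.1 + p.2 • w) '' ↑(S ×ˢ Finset.range n)
  have hcard : translates.encard = S.card * n := by
    have hinj := (injOn_add_nsmul hw hS).mono (s₁ := ↑(S ×ˢ Finset.range n)) (by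
      rw [Finset.coe_product]
      exact prod_mono_right (subset_univ _))
    rw [hinj.encard_image, encard_coe_eq_coe_finsetCard, Finset.card_product, Finset.card_range,
      Nat.cast_mul]
  have hsub : translates ⊆ A ∩ closedBall 0 ↑(M + n * ⌈‖w‖⌉₊) := by
    rintro _ ⟨⟨x, j⟩, hxj, rfl⟩
    obtain ⟨hx, hj⟩ := Finset.mem_product.mp hxj
    refine ⟨?_, mem_closedBall_zero_iff.mpr ?_⟩
    · have hiter := hA.iterate j (hSA hx)
      rwa [add_right_iterate] at hiter
    · have hjn : (j : ℝ) ≤ n := by exact_mod_cast (Finset.mem_range.mp hj).le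
      calc ‖x + j • w‖ ≤ ‖x‖ + ‖j • w‖ := norm_add_le _ _
        _ ≤ M + j * ‖w‖ := add_le_add (hSM x hx) (norm_nsmul_le)
        _ ≤ M + n * ⌈‖w‖⌉₊ := by gcongr; exact Nat.le_ceil _
        _ = ↑(M + n * ⌈‖w‖⌉₊) := by push_cast; rfl
  have hle := (encard_le_encard hsub).trans (hgrowth _ (by positivity))
  rw [hcard] at hle
  exact_mod_cast hle

lemma card_le_of_mapsTo_add (hw : ¬IsOfFinAddOrder w) (hA : MapsTo (· + w) A A)
    (hgrowth : ∀ m : ℕ, 0 < m → (A ∩ closedBall 0 m).encard ≤ a * m) {S : Finset G}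
    (hSA : ↑S ⊆ A) (hS : (S : Set G).InjOn ((↑) : G → G ⧸ zmultiples w)) :
    S.card ≤ a * ⌈‖w‖⌉₊ := by
  obtain ⟨R, hR, hSR⟩ := S.finite_toSet.isBounded.exists_pos_norm_le
  exact le_mul_of_forall_mul_le_mul_add <|
    card_mul_le_of_mapsTo_add hw hA hgrowth hSA hS (Nat.ceil_pos.mpr hR)
      fun x hx => (hSR x hx).trans (Nat.le_ceil R)

lemma encard_image_mk_le_of_mapsTo_add (hw : ¬IsOfFinAddOrder w) (hA : MapsTo (· + w) A A)
    (hgrowth : ∀ m : ℕ, 0 < m → (A ∩ closedBall 0 m).encard ≤ a * m) :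
    (((↑) : G → G ⧸ zmultiples w) '' A).encard ≤ ↑(a * ⌈‖w‖⌉₊) := by
  obtain ⟨S, hSA, hS⟩ := exists_subset_bijOn A ((↑) : G → G ⧸ zmultiples w)
  rw [← hS.image_eq, hS.injOn.encard_image]
  by_contra! hlt
  obtain ⟨T, hTS, hT⟩ := exists_subset_encard_eq (Order.add_one_le_of_lt hlt)
  lift T to Finset G using finite_of_encard_eq_coe hT
  have hle := card_le_of_mapsTo_add hw hA hgrowth (hTS.trans hSA) (hS.injOn.mono hTS)
  rw [encard_coe_eq_coe_finsetCard] at hT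
  have hcard : T.card = a * ⌈‖w‖⌉₊ + 1 := by exact_mod_cast hT
  omega

theorem sparse_periodic_is_finite_sum_of_fibers_general {M : Type*} [AddCommMonoid M] {c : G → M}
    (hw : ¬IsOfFinAddOrder w) (hc : Function.Periodic c w)
    (hgrowth : ∀ m : ℕ, 0 < m → (support c ∩ closedBall 0 m).encard ≤ a * m) :
    ∃ (r : ℕ) (e : Fin r → G → M), c = ∑ j, e j ∧
      ∀ j, (∃ x, ∀ y ∈ support (e j), y - x ∈ zmultiples w) ∧ Function.Periodic (e j) w := by
  have hmaps : MapsTo (· + w) (support c) (support c) := fun u hu => by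
    rwa [mem_support, hc u]
  have hfin : (((↑) : G → G ⧸ zmultiples w) '' support c).Finite :=
    finite_of_encard_le_coe (encard_image_mk_le_of_mapsTo_add hw hmaps hgrowth)
  obtain ⟨r, q, hq, hrange⟩ := hfin.fin_param
  refine ⟨r, fun j => ((↑) ⁻¹' {q j} : Set G).indicator c,
    (sum_indicator_preimage_singleton hq hrange.ge).symm,
    fun j => ⟨?_, periodic_indicator_preimage_mk hc (q j)⟩⟩
  obtain ⟨x, hx⟩ := QuotientAddGroup.mk_surjective (q j)
  refine ⟨x, fun y hy => QuotientAddGroup.eq_iff_sub_mem.mp ?_⟩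
  have hyq : y ∈ ((↑) ⁻¹' {q j} : Set G) := support_indicator_subset hy
  exact Eq.trans hyq hx.symm

end LinearGrowth

section IntegerLattice

variable {d : ℕ}

lemma cube_eq_closedBall (m : ℕ) (t : Fin d → ℤ) : cube m t = closedBall t m := by
  ext u
  simp only [cube, mem_ofPred_eq, mem_closedBall, dist_pi_le_iff m.cast_nonneg, Int.dist_eq]
  exact_mod_cast Iff.rfl

lemma Sparse.exists_encard_inter_closedBall_le {c : (Fin d → ℤ) → ℤ} (hc : Sparse c) :
    ∃ a : ℕ, ∀ m : ℕ, 0 < m → ∀ t, (support c ∩ closedBall t m).encard ≤ a * m := by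
  obtain ⟨a, -, ha⟩ := hc
  refine ⟨a, fun m hm t => ?_⟩
  have hfin : (support c ∩ closedBall t m).Finite :=
    (isCompact_closedBall t _).finite_of_discrete.inter_of_right _
  rw [← hfin.cast_ncard_eq, ← cube_eq_closedBall]
  exact_mod_cast ha m hm t

lemma isFiber_of_sub_mem_zmultiples {e : (Fin d → ℤ) → ℤ} {v : Fin d → ℤ} {k : ℤ}
    (he : ∃ x, ∀ y ∈ support e, y - x ∈ zmultiples (k • v)) : IsFiber e v := by
  obtain ⟨x, hx⟩ := he
  refine ⟨x, fun y hy => ?_⟩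
  obtain ⟨n, hn : n • k • v = y - x⟩ := mem_zmultiples_iff.mp (hx y hy)
  refine ⟨(n * k : ℤ), funext fun i => ?_⟩
  rw [← add_sub_cancel x y, ← hn]
  simp [intVecQ, mul_assoc]

end IntegerLattice

/-- A sparse configuration that is periodic in direction `v` (for some
nonzero `v ∈ ℤ^d`) is a finite sum of periodic `v`-fibers. -/
theorem sparse_periodic_is_finite_sum_of_fibers
    {d : ℕ} (c : (Fin d → ℤ) → ℤ) (hconf : (Set.range c).Finite) (hsparse : Sparse c)
    (v : Fin d → ℤ) (hv : v ≠ 0)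
    (hper : ∃ k : ℤ, k ≠ 0 ∧ Periodic c (k • v)) :
    FinSumPeriodicFibers v c := by
  obtain ⟨⟨k, hk, hp⟩, a, ha⟩ := hper, hsparse.exists_encard_inter_closedBall_le
  have hw : k • v ≠ 0 := smul_ne_zero hk hv
  obtain ⟨r, e, hc, he⟩ := sparse_periodic_is_finite_sum_of_fibers_general
    (not_isOfFinAddOrder_of_isAddTorsionFree hw) hp fun m hm => ha m hm 0
  exact ⟨r, e, hc, fun j => ⟨isFiber_of_sub_mem_zmultiples (he j).1, k • v, hw, (he j).2⟩⟩

end PaperFormal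
end

section
/- A configuration c : ℤ^d → ℤ is periodic (has a nonzero period) if and only if c is annihilated by some line polynomial, i.e., there exist a nonzero v ∈ ℤ^d and a line polynomial f in direction v with fc = 0. -/
namespace PaperFormal

/-!
A periodic configuration is annihilated by `X^w - 1`. Conversely, the integer points of the
line `ℚv` are the multiples of one vector `p`, so a line polynomial in direction `v` makes every
sequence `k ↦ c (u + k • p)` satisfy one linear recurrence with nonzero extreme coefficients. Such
a recurrence determines a sequence, in both directions, from one window of consecutive values;
hence only finitely many sequences over a finite alphabet satisfy it. The shift permutes them, and
the order of this permutation is a period common to all of them.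
-/

section Recurrence

open Finset (range)

/-- The two-sided sequence `a` solves the linear recurrence of order `n` with coefficients
`g 0, …, g n`; the recurrence is written as a convolution, to match `polyApply`, and the values
`g j` with `j > n` are irrelevant. -/
def SatisfiesRecurrence {R : Type*} [NonUnitalNonAssocSemiring R] (g : ℕ → R) (n : ℕ)
    (a : ℤ → R) : Prop :=
  ∀ k : ℤ, ∑ j ∈ range (n + 1), g j * a (k - j) = 0

variable {R : Type*} [NonUnitalNonAssocRing R] {g : ℕ → R} {n : ℕ} {a b : ℤ → R}

lemma SatisfiesRecurrence.sub (ha : SatisfiesRecurrence g n a) (hb : SatisfiesRecurrence g n b) :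
    SatisfiesRecurrence g n (a - b) := fun k => by
  simp only [Pi.sub_apply, mul_sub, Finset.sum_sub_distrib, ha k, hb k, sub_zero]

lemma SatisfiesRecurrence.shift (ha : SatisfiesRecurrence g n a) :
    SatisfiesRecurrence g n (fun k => a (k + 1)) := fun k => by
  simpa only [sub_add_eq_add_sub] using ha (k + 1)

variable [NoZeroDivisors R]

lemma SatisfiesRecurrence.apply_add_eq_zero (ha : SatisfiesRecurrence g n a) (hg : g 0 ≠ 0)
    {k : ℤ} (hwin : ∀ x ∈ Set.Ico k (k + n), a x = 0) : a (k + n) = 0 := by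
  have hrec := ha (k + n)
  rw [Finset.sum_range_succ', Finset.sum_eq_zero fun j hj => ?_] at hrec
  · simpa [hg] using hrec
  · rw [Finset.mem_range] at hj
    rw [hwin _ ⟨by lia, by lia⟩, mul_zero]

lemma SatisfiesRecurrence.apply_sub_one_eq_zero (ha : SatisfiesRecurrence g n a) (hg : g n ≠ 0)
    {k : ℤ} (hwin : ∀ x ∈ Set.Ico k (k + n), a x = 0) : a (k - 1) = 0 := by
  have hrec := ha (k - 1 + n)
  rw [Finset.sum_range_succ, Finset.sum_eq_zero fun j hj => ?_] at hrec
  · simpa [hg] using hrec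
  · rw [Finset.mem_range] at hj
    rw [hwin _ ⟨by lia, by lia⟩, mul_zero]

lemma SatisfiesRecurrence.eq_zero_of_window (ha : SatisfiesRecurrence g n a) (hg₀ : g 0 ≠ 0)
    (hgₙ : g n ≠ 0) {i : ℤ} (hwin : ∀ x ∈ Set.Ico i (i + n), a x = 0) : a = 0 := by
  have hwins (k : ℤ) : ∀ x ∈ Set.Ico k (k + n), a x = 0 := by
    induction k using Int.inductionOn' (b := i) with
    | zero => exact hwin
    | succ k _ ih =>
      rintro x ⟨hkx, hxk⟩
      obtain hx | rfl : x < k + n ∨ x = k + n := by lia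
      · exact ih x ⟨by lia, hx⟩
      · exact ha.apply_add_eq_zero hg₀ ih
    | pred k _ ih =>
      rintro x ⟨hkx, hxk⟩
      obtain rfl | hx : x = k - 1 ∨ k ≤ x := by lia
      · exact ha.apply_sub_one_eq_zero hgₙ ih
      · exact ih x ⟨hx, by lia⟩
  funext x
  simpa using ha.apply_add_eq_zero hg₀ (hwins (x - n))

lemma SatisfiesRecurrence.ext_window (ha : SatisfiesRecurrence g n a)
    (hb : SatisfiesRecurrence g n b) (hg₀ : g 0 ≠ 0) (hgₙ : g n ≠ 0) {i : ℤ}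
    (hwin : Set.EqOn a b (Set.Ico i (i + n))) : a = b :=
  sub_eq_zero.mp <| (ha.sub hb).eq_zero_of_window hg₀ hgₙ fun _ hx => sub_eq_zero.mpr (hwin hx)

lemma finite_setOf_satisfiesRecurrence {A : Set R} (hA : A.Finite) (hg₀ : g 0 ≠ 0)
    (hgₙ : g n ≠ 0) : {a : ℤ → R | (∀ k, a k ∈ A) ∧ SatisfiesRecurrence g n a}.Finite := by
  have hwindows : {w : Set.Ico (0 : ℤ) (0 + n) → R | ∀ x, w x ∈ A}.Finite :=
    Set.Finite.pi' fun _ => hA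
  have domRestrict_mapsTo : Set.MapsTo (Set.Ico (0 : ℤ) (0 + n)).domRestrict
      {a | (∀ k, a k ∈ A) ∧ SatisfiesRecurrence g n a} {w | ∀ x, w x ∈ A} := fun a ha x => ha.1 x
  exact .of_injOn domRestrict_mapsTo (fun a ha b hb hab =>
    ha.2.ext_window hb.2 hg₀ hgₙ (Set.domRestrict_eq_domRestrict_iff.mp hab)) hwindows

end Recurrence

lemma exists_common_period {α : Type*} {S : Set (ℤ → α)} (hS : S.Finite)
    (hshift : ∀ a ∈ S, (fun k => a (k + 1)) ∈ S) :
    ∃ m : ℕ, 0 < m ∧ ∀ a ∈ S, Function.Periodic a (m : ℤ) := by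
  have : Finite S := hS
  let shift (a : S) : S := ⟨fun k => a.1 (k + 1), hshift a a.2⟩
  have shift_injective : Function.Injective shift := fun a b hab => by
    ext k
    simpa [shift] using congrFun (congrArg Subtype.val hab) (k - 1)
  have iterate_shift (m : ℕ) (a : S) (k : ℤ) : (shift^[m] a).1 k = a.1 (k + m) := by
    induction m generalizing k with
    | zero => simp
    | succ m ih =>
      rw [Function.iterate_succ_apply', Nat.cast_succ, add_comm (m : ℤ), ← add_assoc]
      exact ih (k + 1)
  let σ : Equiv.Perm S := .ofBijective shift (Finite.injective_iff_bijective.mp shift_injective)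
  refine ⟨orderOf σ, orderOf_pos σ, fun a ha k => ?_⟩
  have hσ : shift^[orderOf σ] ⟨a, ha⟩ = ⟨a, ha⟩ := by
    rw [show shift = σ from rfl, ← Equiv.Perm.coe_pow, pow_orderOf_eq_one, Equiv.Perm.one_apply]
  calc a (k + orderOf σ) = (shift^[orderOf σ] ⟨a, ha⟩).1 k := (iterate_shift _ ⟨a, ha⟩ k).symm
    _ = a k := by rw [hσ]

lemma exists_progression_superset {G : Type*} [AddGroup G] {s : Set G} (hfin : s.Finite)
    (hne : s.Nonempty) {p : G} (hs : ∀ x ∈ s, ∀ y ∈ s, -x + y ∈ AddSubgroup.zmultiples p) :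
    ∃ w ∈ s, ∃ n : ℕ, w + n • p ∈ s ∧ ∀ x ∈ s, ∃ j ≤ n, x = w + j • p := by
  obtain ⟨z, hz⟩ := hne
  choose! index hindex using fun x hx => AddSubgroup.mem_zmultiples_iff.mp (hs z hz x hx)
  obtain ⟨w, hw, hmin⟩ := Set.exists_min_image s index hfin ⟨z, hz⟩
  obtain ⟨y, hy, hmax⟩ := Set.exists_max_image s index hfin ⟨z, hz⟩
  have eq_add (x : G) (hx : x ∈ s) : x = w + (index x - index w).toNat • p := by
    rw [← natCast_zsmul, Int.toNat_sub_of_le (hmin x hx), sub_eq_neg_add, add_zsmul, neg_zsmul,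
      hindex x hx, hindex w hw]
    simp [add_assoc]
  refine ⟨w, hw, (index y - index w).toNat, eq_add y hy ▸ hy, fun x hx => ?_⟩
  exact ⟨_, Int.toNat_le_toNat (sub_le_sub_right (hmax x hx) _), eq_add x hx⟩

/-- The group `ℤ^d ∩ ℚv` of integer points of the line through the origin in direction `v`. -/
def latticeLine {d : ℕ} (v : Fin d → ℤ) : AddSubgroup (Fin d → ℤ) :=
  (Submodule.span ℚ {intVecQ v}).toAddSubgroup.comap ((Int.castAddHom ℚ).compLeft (Fin d))

lemma mem_latticeLine {d : ℕ} {v w : Fin d → ℤ} :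
    w ∈ latticeLine v ↔ ∃ q : ℚ, q • intVecQ v = intVecQ w :=
  Submodule.mem_span_singleton

lemma exists_latticeLine_eq_zmultiples {d : ℕ} {v : Fin d → ℤ} (hv : v ≠ 0) :
    ∃ p : Fin d → ℤ, p ≠ 0 ∧ latticeLine v = AddSubgroup.zmultiples p := by
  obtain ⟨i, hi⟩ := Function.ne_iff.mp hv
  let coord : latticeLine v →+ ℤ := (Pi.evalAddMonoidHom _ i).comp (latticeLine v).subtype
  have coord_injective : Function.Injective coord := by
    rw [injective_iff_map_eq_zero]
    rintro ⟨w, hw⟩ (hwi : w i = 0)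
    obtain ⟨q, hq⟩ := mem_latticeLine.mp hw
    have hq₀ : q = 0 := by simpa [intVecQ, hwi, show v i ≠ 0 from hi] using congrFun hq i
    ext j
    simpa [intVecQ, hq₀, eq_comm] using congrFun hq j
  have : IsAddCyclic (latticeLine v) := isAddCyclic_of_injective coord coord_injective
  obtain ⟨p, hp⟩ := (latticeLine v).isAddCyclic_iff_exists_zmultiples_eq_top.mp this
  refine ⟨p, ?_, hp.symm⟩
  rintro rfl
  have hmem : v ∈ latticeLine v := mem_latticeLine.mpr ⟨1, one_smul ℚ _⟩
  rw [← hp, AddSubgroup.zmultiples_zero_eq_bot, AddSubgroup.mem_bot] at hmem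
  exact hv hmem

lemma IsLinePoly.exists_progression {d : ℕ} {f : (Fin d → ℤ) → ℤ} {v : Fin d → ℤ}
    (hf : IsLinePoly f v) :
    ∃ p : Fin d → ℤ, p ≠ 0 ∧ ∃ (w : Fin d → ℤ) (n : ℕ), f w ≠ 0 ∧ f (w + n • p) ≠ 0 ∧
      ∀ x ∈ Function.support f, ∃ j ≤ n, x = w + j • p := by
  obtain ⟨hfin, hv, hcard, u, hu⟩ := hf
  obtain ⟨p, hp, hline⟩ := exists_latticeLine_eq_zmultiples hv
  have hne : (Function.support f).Nonempty := Set.nonempty_of_ncard_ne_zero (by lia)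
  obtain ⟨w, hw, n, hn, hsupp⟩ := exists_progression_superset hfin hne (p := p) fun x hx y hy => by
    obtain ⟨q, hq⟩ := hu x hx
    obtain ⟨r, hr⟩ := hu y hy
    rw [← hline, mem_latticeLine]
    refine ⟨r - q, ?_⟩
    have hsub : intVecQ (-x + y) = intVecQ y - intVecQ x := by
      ext i
      simp [intVecQ, neg_add_eq_sub]
    rw [hsub, hq, hr, sub_smul, add_sub_add_left_eq_sub]
  exact ⟨p, hp, w, n, hw, hn, hsupp⟩

lemma polyApply_eq_sum_range {d : ℕ} {f c : (Fin d → ℤ) → ℤ} {w p : Fin d → ℤ} (hp : p ≠ 0) {n : ℕ}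
    (hsupp : ∀ x ∈ Function.support f, ∃ j ≤ n, x = w + j • p) (u : Fin d → ℤ) :
    polyApply f c u = ∑ j ∈ Finset.range (n + 1), f (w + j • p) * c (u - (w + j • p)) := by
  have hinj : Function.Injective fun j : ℕ => w + j • p :=
    (add_right_injective w).comp ((IsAddLeftRegular.all p).nsmul_injective hp)
  rw [polyApply, finsum_eq_sum_of_support_subset (s := (Finset.range (n + 1)).map ⟨_, hinj⟩),
    Finset.sum_map]
  · rfl
  · intro x hx
    obtain ⟨j, hj, rfl⟩ := hsupp x (Function.support_mul_subset_left _ _ hx)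
    simpa using ⟨j, by lia, rfl⟩

lemma satisfiesRecurrence_of_polyApply_eq_zero {d : ℕ} {f c : (Fin d → ℤ) → ℤ}
    {w p : Fin d → ℤ} (hp : p ≠ 0) {n : ℕ}
    (hsupp : ∀ x ∈ Function.support f, ∃ j ≤ n, x = w + j • p) (hfc : polyApply f c = 0)
    (u : Fin d → ℤ) :
    SatisfiesRecurrence (fun j => f (w + j • p)) n (fun k => c (u + k • p)) := fun k => by
  calc ∑ j ∈ Finset.range (n + 1), f (w + j • p) * c (u + (k - j) • p)
      = ∑ j ∈ Finset.range (n + 1), f (w + j • p) * c (u + w + k • p - (w + j • p)) := by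
        refine Finset.sum_congr rfl fun j _ => ?_
        congr 2
        rw [sub_smul, natCast_zsmul]
        abel
    _ = polyApply f c (u + w + k • p) := (polyApply_eq_sum_range hp hsupp _).symm
    _ = 0 := congrFun hfc _

lemma support_diffPoly {d : ℕ} (w : Fin d → ℤ) : Function.support (diffPoly w) = {w, 0} := by
  ext u
  simp only [Function.mem_support, diffPoly, Set.mem_insert_iff, Set.mem_singleton_iff]
  split_ifs <;> simp_all

lemma isLinePoly_diffPoly {d : ℕ} {w : Fin d → ℤ} (hw : w ≠ 0) : IsLinePoly (diffPoly w) w := by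
  rw [IsLinePoly, IsPoly, support_diffPoly]
  refine ⟨Set.toFinite _, hw, (Set.ncard_pair hw).ge, 0, ?_⟩
  rintro x (rfl | rfl)
  · exact ⟨1, by ext; simp [intVecQ]⟩
  · exact ⟨0, by ext; simp [intVecQ]⟩

lemma polyApply_diffPoly {d : ℕ} {w : Fin d → ℤ} (hw : w ≠ 0) (c : (Fin d → ℤ) → ℤ)
    (u : Fin d → ℤ) : polyApply (diffPoly w) c u = c (u - w) - c u := by
  have hsupp : (Function.support fun v => diffPoly w v * c (u - v)) ⊆
      ({w, 0} : Finset (Fin d → ℤ)) := by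
    simp [support_diffPoly]
  rw [polyApply, finsum_eq_sum_of_support_subset _ hsupp, Finset.sum_pair hw]
  simp [diffPoly, hw.symm, sub_eq_add_neg]

lemma polyApply_diffPoly_eq_zero {d : ℕ} {c : (Fin d → ℤ) → ℤ} {w : Fin d → ℤ} (hw : w ≠ 0)
    (hc : Periodic c w) : polyApply (diffPoly w) c = 0 := by
  funext u
  rw [polyApply_diffPoly hw, Pi.zero_apply, sub_eq_zero]
  simpa using (hc (u - w)).symm

/-- A configuration is periodic if and only if it is annihilated by a line
polynomial. -/
theorem periodic_iff_annihilated_by_line_polynomial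
    {d : ℕ} (c : (Fin d → ℤ) → ℤ) (hconf : (Set.range c).Finite) :
    (∃ w : Fin d → ℤ, w ≠ 0 ∧ Periodic c w) ↔
    (∃ (v : Fin d → ℤ) (f : (Fin d → ℤ) → ℤ), v ≠ 0 ∧ IsLinePoly f v ∧ polyApply f c = 0) := by
  constructor
  · rintro ⟨w, hw, hper⟩
    exact ⟨w, diffPoly w, hw, isLinePoly_diffPoly hw, polyApply_diffPoly_eq_zero hw hper⟩
  · rintro ⟨v, f, -, hf, hfc⟩
    obtain ⟨p, hp, w, n, hw, hn, hsupp⟩ := hf.exists_progression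
    have hfinite := finite_setOf_satisfiesRecurrence (g := fun j => f (w + j • p)) (n := n) hconf
      (by simpa using hw) hn
    obtain ⟨m, hm, hper⟩ := exists_common_period hfinite fun a ha => ⟨fun k => ha.1 _, ha.2.shift⟩
    refine ⟨m • p, smul_ne_zero hm.ne' hp, fun u => ?_⟩
    have hrec := satisfiesRecurrence_of_polyApply_eq_zero hp hsupp hfc u
    simpa using hper (fun k => c (u + k • p)) ⟨fun k => Set.mem_range_self _, hrec⟩ 0

end PaperFormal
end
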